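/- arXiv:2102.09736 — 2 statements merged into one kernel-verified Lean document; each statement's English description precedes it below -/
import Mathlib

section
/- Let x ∈ O(m,n) be nondegenerate and not lying in A, with rank r and level ℓ, and suppose x does NOT satisfy (†) (note ℓ ≥ 1 always holds). Then the elements u := x̌ + (x̄∂_ℓ)σ_{ℓ−1} and v := (x̌∂_{ℓ−1})σ_{ℓ−1} + x̄ of ℤΔ([m],[n]) both belong to O(m,n). -/
/-!
The parts `x̄` and `x̌` are treated separately. For injective `γ`, the coefficient of `γ` in `x̄β`
is always nonnegative (`bar_nonneg`), and the coefficient of `γ` in `x̌β` is nonnegative as soon as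
`β` takes a value in the interval `[ℓ, r]` (`check_nonneg`).

Both facts rest on the same observation. By (O2), whenever `α₀` is strictly increasing on a nonempty
set `S`, the coefficients `x_α` of those `α` that agree with `α₀` on `S` have nonnegative sum
(`sum_agree_nonneg`). If some `α₀ ∈ supp x̄` satisfies `α₀β = γ`, then the `α ∈ supp x̄` with
`αβ = γ` are exactly the `α ∈ supp x` agreeing with `α₀` on `S = {r} ∪ {i ∈ im β : i < r}`:
all of them equal `n` from `r` on. Moreover `α₀` is strictly increasing on `S`, since members of
`supp x` stay below `n` before `r`. For `x̌`, every operator in the support is constant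
on `[ℓ, r]`, so a value `e ∈ [ℓ, r]` of `β` can be exchanged for `r`: here
`S = {r} ∪ (im β ∖ {e})`.

Let `δ` be the operator moving `ℓ` to `ℓ - 1` and fixing everything else, so that
`uβ = x̌β + x̄(δβ)`. If `ℓ ∉ im β` this is `xβ`; otherwise both summands have nonnegative coefficient
at `γ`. The argument for `v` is the same, with the operator moving `ℓ - 1` to `ℓ` applied to `x̌`.
-/

abbrev ZD (a b : ℕ) := (Fin a →o Fin b) →₀ ℤ

noncomputable def act {a b c : ℕ} (x : ZD b c) (β : Fin a →o Fin b) : ZD a c :=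
  Finsupp.mapDomain (fun α => α.comp β) x

def face {m : ℕ} (i : Fin (m+1)) : Fin m →o Fin (m+1) :=
  ⟨i.succAbove, (Fin.succAboveOrderEmb i).monotone⟩

def degen {m : ℕ} (i : Fin m) : Fin (m+1) →o Fin m :=
  ⟨i.predAbove, Fin.predAbove_right_monotone i⟩

def memO {a b : ℕ} (x : ZD a b) : Prop :=
  (x.sum fun _ c => c) = 1 ∧
    ∀ (p : ℕ) (β : Fin (p+1) →o Fin a) (γ : Fin (p+1) →o Fin b),
      Function.Injective ⇑β → Function.Injective ⇑γ → 0 ≤ act x β γ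

/-- The witness operation `x ▽ₖ y`, for `x, y ∈ ℤΔ([m],[n])` and `1 ≤ k ≤ m`. -/
noncomputable def fill {m b : ℕ} (k : ℕ) (h1 : 1 ≤ k) (h2 : k ≤ m)
    (x y : ZD (m+1) b) : ZD (m+2) b :=
  act x (degen ⟨k, by omega⟩)
    - act (act (act x (face ⟨k-1, by omega⟩)) (degen ⟨k-1, by omega⟩)) (degen ⟨k-1, by omega⟩)
    + act y (degen ⟨k-1, by omega⟩)

/-- The pasting operation `x ⋆ₖ y`. -/
noncomputable def paste {m b : ℕ} (k : ℕ) (h1 : 1 ≤ k) (h2 : k ≤ m)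
    (x y : ZD (m+1) b) : ZD (m+1) b :=
  x - act (act x (face ⟨k-1, by omega⟩)) (degen ⟨k-1, by omega⟩) + y

/-- `x` is degenerate at `k`, i.e. `x = y σₖ` for some `y` one dimension lower. -/
def isDegenAt {a b : ℕ} (x : ZD a b) (k : ℕ) : Prop :=
  ∃ (p : ℕ) (hp : a = p + 1) (hk : k < p) (y : ZD p b),
    x = hp ▸ act y (degen ⟨k, hk⟩)

def isDegen {a b : ℕ} (x : ZD a b) : Prop := ∃ k, isDegenAt x k

/-- The number of preimages of the top element `n` under `α`. -/
def npre {a n : ℕ} (α : Fin a →o Fin (n+1)) : ℕ :=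
  (Finset.univ.filter fun i => α i = Fin.last n).card

/-- `x` lies in the simplicial subset `A`: all operators in the support of `x`
have equally many preimages of the top element. -/
def inA {a n : ℕ} (x : ZD a (n+1)) : Prop :=
  ∀ α ∈ x.support, ∀ β ∈ x.support, npre α = npre β

/-- `r` is the rank of `x`: the least `i` such that some `α ∈ supp x` has `α i = n`. -/
def isRank {a n : ℕ} (x : ZD a (n+1)) (r : Fin a) : Prop :=
  IsLeast {i : Fin a | ∃ α ∈ x.support, α i = Fin.last n} r

/-- `x̌`: the part of `x` supported on operators with `α r < n`. -/
noncomputable def checkPart {a n : ℕ} (x : ZD a (n+1)) (r : Fin a) : ZD a (n+1) :=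
  x.filter (fun α => ¬ (α r = Fin.last n))

/-- `x̄`: the part of `x` supported on operators with `α r = n`. -/
noncomputable def barPart {a n : ℕ} (x : ZD a (n+1)) (r : Fin a) : ZD a (n+1) :=
  x.filter (fun α => α r = Fin.last n)

/-- `ℓ` is the level of `x` (with rank `r`). -/
def isLevel {a n : ℕ} (x : ZD a (n+1)) (r ℓ : Fin a) : Prop :=
  IsLeast {i : Fin a | ∀ α ∈ (checkPart x r).support, α i = α r} ℓ

/-- Condition (†): `x̄` is degenerate at `ℓ - 1`. -/
def dagger {a n : ℕ} (x : ZD a (n+1)) (r ℓ : Fin a) : Prop :=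
  isDegenAt (barPart x r) ((ℓ : ℕ) - 1)

/-- The corank of `x`: the greatest number of preimages of `n` among operators in `supp x`. -/
def corank {a n : ℕ} (x : ZD a (n+1)) : ℕ := x.support.sup npre

/-- `u = x̌ + (x̄ ∂ℓ) σ(ℓ-1)`. -/
noncomputable def uPart {m n : ℕ} (x : ZD (m+1) (n+1)) (r ℓ : Fin (m+1))
    (h1 : 1 ≤ (ℓ : ℕ)) : ZD (m+1) (n+1) :=
  checkPart x r
    + act (act (barPart x r) (face ℓ)) (degen ⟨(ℓ:ℕ)-1, by have := ℓ.isLt; omega⟩)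

/-- `v = (x̌ ∂(ℓ-1)) σ(ℓ-1) + x̄`. -/
noncomputable def vPart {m n : ℕ} (x : ZD (m+1) (n+1)) (r ℓ : Fin (m+1))
    (h1 : 1 ≤ (ℓ : ℕ)) : ZD (m+1) (n+1) :=
  act (act (checkPart x r) (face ⟨(ℓ:ℕ)-1, by have := ℓ.isLt; omega⟩))
      (degen ⟨(ℓ:ℕ)-1, by have := ℓ.isLt; omega⟩)
    + barPart x r

/-- The parent `w = x̌ σℓ + x̄ σ(ℓ-1)`. -/
noncomputable def parent {m n : ℕ} (x : ZD (m+1) (n+1)) (r ℓ : Fin (m+1)) :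
    ZD (m+2) (n+1) :=
  act (checkPart x r) (degen ℓ)
    + act (barPart x r) (degen ⟨(ℓ:ℕ)-1, by have := ℓ.isLt; omega⟩)

/-- Bilinear extension of composition: `(x ∘ y)_γ = Σ_{α∘β = γ} x_α · y_β`. -/
noncomputable def zcomp {p m n : ℕ} (x : ZD m n) (y : ZD p m) : ZD p n :=
  x.sum fun α c => c • Finsupp.mapDomain (fun β => α.comp β) y

/-! ### Coefficients of `xβ` -/

open scoped Classical in
lemma act_apply {a b c : ℕ} (x : ZD b c) (β : Fin a →o Fin b) (γ : Fin a →o Fin c) :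
    act x β γ = ∑ α ∈ x.support with α.comp β = γ, x α := by
  rw [act, Finsupp.mapDomain, Finsupp.sum_apply, Finsupp.sum, Finset.sum_filter]
  exact Finset.sum_congr rfl fun α _ => by rw [Finsupp.single_apply]

open scoped Classical in
lemma act_filter_apply {a b c : ℕ} (x : ZD b c) (P : (Fin b →o Fin c) → Prop)
    [DecidablePred P] (β : Fin a →o Fin b) (γ : Fin a →o Fin c) :
    act (x.filter P) β γ = ∑ α ∈ x.support with P α ∧ α.comp β = γ, x α := by
  rw [act_apply, Finsupp.support_filter, Finset.filter_filter]
  refine Finset.sum_congr (by ext; simp) fun α hα => ?_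
  exact Finsupp.filter_apply_pos P x (Finset.mem_filter.1 hα).2.1

lemma act_act {a b c d : ℕ} (x : ZD c d) (f : Fin b →o Fin c) (g : Fin a →o Fin b) :
    act (act x f) g = act x (f.comp g) := by
  rw [act, act, act, ← Finsupp.mapDomain_comp]
  rfl

lemma act_add {a b c : ℕ} (x y : ZD b c) (β : Fin a →o Fin b) :
    act (x + y) β = act x β + act y β :=
  Finsupp.mapDomain_add

lemma sum_act {a b c : ℕ} (x : ZD b c) (β : Fin a →o Fin b) :
    ((act x β).sum fun _ k => k) = x.sum fun _ k => k :=
  Finsupp.sum_mapDomain_index (fun _ => rfl) (fun _ _ _ => rfl)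

lemma sum_coeff_add {a b : ℕ} (x y : ZD a b) :
    ((x + y).sum fun _ k => k) = (x.sum fun _ k => k) + y.sum fun _ k => k :=
  Finsupp.sum_add_index' (fun _ => rfl) (fun _ _ _ => rfl)

lemma checkPart_add_barPart {a n : ℕ} (x : ZD a (n+1)) (r : Fin a) :
    checkPart x r + barPart x r = x :=
  (add_comm _ _).trans (Finsupp.filter_add_filter_not x _)

/-! ### Nonnegativity of the two parts -/

open scoped Classical in
/-- Condition (O2) in terms of subsets `S ⊆ [m]`: the operators agreeing on `S` with one that is
strictly increasing there have nonnegative total coefficient. -/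
lemma sum_agree_nonneg {a b : ℕ} {x : ZD a b} (hx : memO x) (S : Finset (Fin a))
    (hS : S.Nonempty) (α₀ : Fin a →o Fin b) (hα₀ : StrictMonoOn α₀ S) :
    0 ≤ ∑ α ∈ x.support with ∀ i ∈ S, α i = α₀ i, x α := by
  obtain ⟨p, hp⟩ : ∃ p, S.card = p + 1 := Nat.exists_eq_succ_of_ne_zero hS.card_pos.ne'
  let β : Fin (p+1) →o Fin a := (S.orderEmbOfFin hp).toOrderHom
  have hβ (j) : β j ∈ S := S.orderEmbOfFin_mem hp j
  have hinj : Function.Injective β := (S.orderEmbOfFin hp).injective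
  have h := hx.2 p β (α₀.comp β) hinj
    fun i j hij => hinj (hα₀.injOn (hβ i) (hβ j) hij)
  rw [act_apply] at h
  convert h using 3 with α
  constructor
  · intro hα
    ext j
    exact congrArg Fin.val (hα _ (hβ j))
  · intro hα i hi
    have : i ∈ Set.range (S.orderEmbOfFin hp) := by
      rw [Finset.range_orderEmbOfFin]
      exact hi
    obtain ⟨j, rfl⟩ := this
    exact DFunLike.congr_fun hα j

/-- A criterion for nonnegativity of a coefficient of `x'β`, where `x'` is the part of `x` cut out
by `P`: it suffices to describe the contributing operators by agreement on some set `S` with one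
of them, `α₀`, that is strictly increasing on `S`. -/
lemma act_filter_nonneg {a b q : ℕ} {x : ZD a b} (hx : memO x) (P : (Fin a →o Fin b) → Prop)
    [DecidablePred P] (β : Fin q →o Fin a) (γ : Fin q →o Fin b)
    (h : ∀ α₀ ∈ x.support, P α₀ → α₀.comp β = γ → ∃ S : Finset (Fin a), S.Nonempty ∧
      StrictMonoOn α₀ S ∧
      ∀ α ∈ x.support, ((P α ∧ α.comp β = γ) ↔ ∀ i ∈ S, α i = α₀ i)) :
    0 ≤ act (x.filter P) β γ := by
  classical
  rw [act_filter_apply]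
  by_cases hne : ∃ α₀ ∈ x.support, P α₀ ∧ α₀.comp β = γ
  · obtain ⟨α₀, h₀, hP, hc⟩ := hne
    obtain ⟨S, hS, hmono, hiff⟩ := h α₀ h₀ hP hc
    rw [Finset.filter_congr hiff]
    exact sum_agree_nonneg hx S hS α₀ hmono
  · rw [Finset.filter_eq_empty_iff.2 fun α hα hα' => hne ⟨α, hα, hα'⟩, Finset.sum_empty]

/-- Since `x̄` is concentrated on operators equal to `n` exactly from `r` on, its coefficients are
controlled by values at `r` and before. Injectivity of `β` is not needed: without it no `αβ` is
injective. -/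
lemma bar_nonneg {a n q : ℕ} {x : ZD a (n+1)} (hx : memO x) {r : Fin a} (hr : isRank x r)
    (β : Fin q →o Fin a) (γ : Fin q →o Fin (n+1)) (hγ : Function.Injective γ) :
    0 ≤ act (barPart x r) β γ := by
  classical
  refine act_filter_nonneg hx _ β γ fun α₀ h₀ hr₀ hc => ?_
  have hc' (j) : α₀ (β j) = γ j := DFunLike.congr_fun hc j
  refine ⟨insert r ((Finset.univ.image β).filter (· < r)), Finset.insert_nonempty _ _, ?_, ?_⟩
  · have hlt (i) (hi : i < r) : α₀ i < α₀ r := by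
      rw [hr₀]
      exact lt_of_le_of_ne (Fin.le_last _) fun h => absurd (hr.2 ⟨α₀, h₀, h⟩) (not_le.2 hi)
    intro i hi j hj hij
    simp only [Finset.coe_insert, Finset.coe_filter, Finset.mem_image, Finset.mem_univ, true_and,
      Set.mem_insert_iff, Set.mem_ofPred_eq] at hi hj
    rcases hj with rfl | ⟨⟨j, rfl⟩, hj⟩
    · exact hlt i hij
    · rcases hi with rfl | ⟨⟨i, rfl⟩, hi⟩
      · exact absurd hij hj.not_gt
      · rw [hc', hc']
        have hle : γ i ≤ γ j := by rw [← hc', ← hc']; exact α₀.monotone hij.le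
        refine lt_of_le_of_ne hle fun h => ?_
        rw [hγ h] at hij
        exact lt_irrefl _ hij
  · intro α hα
    constructor
    · rintro ⟨hαr, hαc⟩ i hi
      simp only [Finset.mem_insert, Finset.mem_filter, Finset.mem_image, Finset.mem_univ,
        true_and] at hi
      rcases hi with rfl | ⟨⟨j, rfl⟩, -⟩
      · rw [hαr, hr₀]
      · rw [hc']
        exact DFunLike.congr_fun hαc j
    · intro hS
      have hαr : α r = Fin.last n := by rw [hS r (by simp), hr₀]
      refine ⟨hαr, OrderHom.ext _ _ (funext fun j => ?_)⟩
      change α (β j) = γ j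
      rw [← hc']
      rcases lt_or_ge (β j) r with hj | hj
      · exact hS _ (by simp [hj])
      · -- both operators have already reached the top value `n` at `r`
        have h1 := α.monotone hj
        have h2 := α₀.monotone hj
        rw [hαr] at h1
        rw [hr₀] at h2
        rw [Fin.last_le_iff.1 h1, Fin.last_le_iff.1 h2]

lemma level_const {a n : ℕ} {x : ZD a (n+1)} {r ℓ : Fin a} (hl : isLevel x r ℓ)
    {α : Fin a →o Fin (n+1)} (hα : α ∈ x.support) (hαr : ¬ α r = Fin.last n)
    {i : Fin a} (h1 : ℓ ≤ i) (h2 : i ≤ r) : α i = α r := by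
  refine le_antisymm (α.monotone h2) ?_
  rw [← hl.1 α (by rw [checkPart, Finsupp.support_filter]; exact Finset.mem_filter.2 ⟨hα, hαr⟩)]
  exact α.monotone h1

/-- The operators in `supp x̌` are constant on `[ℓ, r]`, so the value `β k` in that interval may be
exchanged for `r`, where the value of an operator tells `x̌` and `x̄` apart. -/
lemma check_nonneg {a n q : ℕ} {x : ZD a (n+1)} (hx : memO x) {r ℓ : Fin a}
    (hl : isLevel x r ℓ) (β : Fin q →o Fin a) (γ : Fin q →o Fin (n+1))
    (hγ : Function.Injective γ) (k : Fin q) (hk1 : ℓ ≤ β k) (hk2 : β k ≤ r) :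
    0 ≤ act (checkPart x r) β γ := by
  classical
  refine act_filter_nonneg hx _ β γ fun α₀ h₀ hr₀ hc => ?_
  have hc' (j) : α₀ (β j) = γ j := DFunLike.congr_fun hc j
  have hmono (i j) (hij : β i < β j) : γ i < γ j := by
    have hle : γ i ≤ γ j := by rw [← hc', ← hc']; exact α₀.monotone hij.le
    refine lt_of_le_of_ne hle fun h => ?_
    rw [hγ h] at hij
    exact lt_irrefl _ hij
  -- `k` is the only index at which `β` meets the interval `[ℓ, r]`
  have huniq (j) (hj1 : ℓ ≤ β j) (hj2 : β j ≤ r) : j = k := hγ (by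
    rw [← hc', ← hc', level_const hl h₀ hr₀ hj1 hj2, level_const hl h₀ hr₀ hk1 hk2])
  have hkr : α₀ r = γ k := by rw [← hc' k, level_const hl h₀ hr₀ hk1 hk2]
  refine ⟨insert r ((Finset.univ.image β).erase (β k)), Finset.insert_nonempty _ _, ?_, ?_⟩
  · intro i hi j hj hij
    simp only [Finset.coe_insert, Finset.coe_erase, Finset.coe_image, Finset.coe_univ,
      Set.image_univ, Set.mem_insert_iff, Set.mem_sdiff, Set.mem_range,
      Set.mem_singleton_iff] at hi hj
    rcases hi with rfl | ⟨⟨i, rfl⟩, hi⟩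
    · rcases hj with rfl | ⟨⟨j, rfl⟩, hj⟩
      · exact absurd hij (lt_irrefl _)
      · rw [hkr, hc']
        exact hmono _ _ (lt_of_le_of_lt hk2 hij)
    · rcases hj with rfl | ⟨⟨j, rfl⟩, hj⟩
      · rw [hkr, hc']
        refine hmono _ _ (lt_of_lt_of_le (lt_of_not_ge fun h => hi ?_) hk1)
        rw [huniq i h hij.le]
      · rw [hc', hc']
        exact hmono _ _ hij
  · intro α hα
    constructor
    · rintro ⟨hαr, hαc⟩ i hi
      have hαc' (j) : α (β j) = γ j := DFunLike.congr_fun hαc j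
      simp only [Finset.mem_insert, Finset.mem_erase, Finset.mem_image, Finset.mem_univ,
        true_and] at hi
      rcases hi with rfl | ⟨-, ⟨j, rfl⟩⟩
      · rw [hkr, ← hαc', level_const hl hα hαr hk1 hk2]
      · rw [hc', hαc']
    · intro hS
      have hrr : α r = α₀ r := hS r (by simp)
      have hαr : ¬ α r = Fin.last n := by rwa [hrr]
      refine ⟨hαr, OrderHom.ext _ _ (funext fun j => ?_)⟩
      change α (β j) = γ j
      by_cases hj : β j = β k
      · rw [← hc' j, hj, level_const hl hα hαr hk1 hk2, hrr, level_const hl h₀ hr₀ hk1 hk2]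
      · rw [← hc' j]
        exact hS _ (by simp [hj])

/-! ### The operators `∂_ℓ σ_{ℓ-1}` and `∂_{ℓ-1} σ_{ℓ-1}` -/

lemma face_val {m : ℕ} (i : Fin (m+1)) (j : Fin m) :
    (face i j : ℕ) = if (j:ℕ) < i then (j:ℕ) else j + 1 := by
  change (i.succAbove j : ℕ) = _
  rw [Fin.succAbove]
  split_ifs <;> simp_all [Fin.lt_def]

lemma degen_val {m : ℕ} (i : Fin m) (j : Fin (m+1)) :
    (degen i j : ℕ) = if (i:ℕ) < j then (j:ℕ) - 1 else j := by
  change (i.predAbove j : ℕ) = _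
  rw [Fin.predAbove]
  simp only [Fin.lt_def, Fin.val_castSucc]
  split_ifs <;> simp

lemma face_degen_upper {m : ℕ} (ℓ : Fin (m+1)) (h : (ℓ:ℕ) - 1 < m) (hℓ : 1 ≤ (ℓ:ℕ))
    (i : Fin (m+1)) (hi : i ≠ ℓ) : face ℓ (degen ⟨(ℓ:ℕ)-1, h⟩ i) = i := by
  have hi' : (i:ℕ) ≠ ℓ := fun h => hi (Fin.ext h)
  apply Fin.ext
  rw [face_val, degen_val]
  dsimp only
  split_ifs <;> omega

lemma face_degen_lower {m : ℕ} (ℓ : Fin (m+1)) (h : (ℓ:ℕ) - 1 < m) (h' : (ℓ:ℕ) - 1 < m + 1)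
    (hℓ : 1 ≤ (ℓ:ℕ)) (i : Fin (m+1)) :
    face ⟨(ℓ:ℕ)-1, h'⟩ (degen ⟨(ℓ:ℕ)-1, h⟩ i) = if (i:ℕ) = ℓ - 1 then ℓ else i := by
  apply Fin.ext
  rw [face_val, degen_val]
  dsimp only
  split_ifs <;> omega

/-- If `x` does not satisfy (†), then `u = x̌ + (x̄∂ℓ)σ(ℓ-1)` and
`v = (x̌∂(ℓ-1))σ(ℓ-1) + x̄` both belong to `O(m,n)`. (Note `ℓ ≥ 1` always holds.) -/
theorem stmt15 (m n : ℕ) (x : ZD (m+1) (n+1)) (hx : memO x) (hnd : ¬ isDegen x)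
    (hA : ¬ inA x) (r ℓ : Fin (m+1)) (hr : isRank x r) (hl : isLevel x r ℓ)
    (hℓ : 1 ≤ (ℓ : ℕ)) (hdag : ¬ dagger x r ℓ) :
    memO (uPart x r ℓ hℓ) ∧ memO (vPart x r ℓ hℓ) := by
  have hlr : ℓ ≤ r := hl.2 fun _ _ => rfl
  refine ⟨⟨?_, fun p β γ hβ hγ => ?_⟩, ⟨?_, fun p β γ hβ hγ => ?_⟩⟩
  · rw [uPart, sum_coeff_add, sum_act, sum_act, ← sum_coeff_add, checkPart_add_barPart]
    exact hx.1
  · rw [uPart, act_add, act_act, act_act]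
    by_cases hmem : ∃ k, β k = ℓ
    · obtain ⟨k, hk⟩ := hmem
      exact add_nonneg (check_nonneg hx hl β γ hγ k hk.ge (hk.trans_le hlr))
        (bar_nonneg hx hr _ γ hγ)
    · have hfix : ((face ℓ).comp ((degen ⟨(ℓ:ℕ)-1, by have := ℓ.isLt; omega⟩).comp β)) = β :=
        OrderHom.ext _ _ (funext fun j =>
          face_degen_upper ℓ _ hℓ (β j) fun h => hmem ⟨j, h⟩)
      rw [hfix, ← act_add, checkPart_add_barPart]
      exact hx.2 p β γ hβ hγ
  · rw [vPart, sum_coeff_add, sum_act, sum_act, ← sum_coeff_add, checkPart_add_barPart]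
    exact hx.1
  · rw [vPart, act_add, act_act, act_act]
    by_cases hmem : ∃ k, (β k : ℕ) = ℓ - 1
    · obtain ⟨k, hk⟩ := hmem
      have hval : face ⟨(ℓ:ℕ)-1, by have := ℓ.isLt; omega⟩
          (degen ⟨(ℓ:ℕ)-1, by have := ℓ.isLt; omega⟩ (β k)) = ℓ := by
        rw [face_degen_lower ℓ _ _ hℓ, if_pos hk]
      exact add_nonneg (check_nonneg hx hl _ γ hγ k hval.ge (hval.trans_le hlr))
        (bar_nonneg hx hr β γ hγ)
    · have hfix : ((face ⟨(ℓ:ℕ)-1, by have := ℓ.isLt; omega⟩).comp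
          ((degen ⟨(ℓ:ℕ)-1, by have := ℓ.isLt; omega⟩).comp β)) = β :=
        OrderHom.ext _ _ (funext fun j =>
          (face_degen_lower ℓ _ _ hℓ (β j)).trans (if_neg fun h => hmem ⟨j, h⟩))
      rw [hfix, ← act_add, checkPart_add_barPart]
      exact hx.2 p β γ hβ hγ
end

section
/- Let x ∈ O(m,n) be nondegenerate and not lying in A, with rank r and level ℓ, and suppose x satisfies (†). Then x̌ is degenerate at ℓ and x̄ is degenerate at ℓ−1, and consequently (x̌∂_ℓ)σ_ℓ + (x̄∂_ℓ)σ_{ℓ−1} = x. (Together with the facts that the child y = x∂_ℓ has level ℓ, y̌ = x̌∂_ℓ and ȳ = x̄∂_ℓ, this says that the parent of the child of x is x, so the parent and child constructions are mutually inverse.) -/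
/-- If `α k = α (k+1)`, then `α` is unchanged by composing with `∂ⱼ σₖ`, `j ∈ {k, k+1}`: the only
point moved by `∂ⱼ σₖ` is `j`, which goes to the other element of `{k, k+1}`. -/
theorem comp_face_degen {m b : ℕ} (α : Fin (m+1) →o Fin b) (k : Fin m) (j : Fin (m+1))
    (hj : j = k.castSucc ∨ j = k.succ) (h : α k.castSucc = α k.succ) :
    (α.comp (face j)).comp (degen k) = α := by
  ext i
  change ((α (j.succAbove (k.predAbove i)) : Fin b) : ℕ) = α i
  by_cases hi : i = j
  · have hp : k.predAbove i = k := by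
      rcases hj with rfl | rfl <;> simp [hi]
    rw [hp, hi]
    rcases hj with rfl | rfl <;> simp [h]
  · congr 2
    rcases hj with rfl | rfl
    · exact Fin.succAbove_predAbove hi
    · exact Fin.succ_succAbove_predAbove hi

theorem act_face_degen {m b : ℕ} (x : ZD (m+1) b) (k : Fin m) (j : Fin (m+1))
    (hj : j = k.castSucc ∨ j = k.succ)
    (h : ∀ α ∈ x.support, α k.castSucc = α k.succ) :
    act (act x (face j)) (degen k) = x := by
  unfold act
  rw [← Finsupp.mapDomain_comp]
  conv_rhs => rw [← Finsupp.mapDomain_id (v := x)]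
  exact Finsupp.mapDomain_congr fun α hα => comp_face_degen α k j hj (h α hα)

theorem apply_eq_of_isDegenAt {m b : ℕ} (x : ZD (m+1) b) (k : Fin m) (hx : isDegenAt x k) :
    ∀ α ∈ x.support, α k.castSucc = α k.succ := by
  classical
  obtain ⟨p, hp, hk, y, h⟩ := hx
  obtain rfl : m = p := by omega
  subst h
  intro α hα
  obtain ⟨β, -, rfl⟩ := Finset.mem_image.1 (Finsupp.mapDomain_support hα)
  change β (Fin.predAbove k k.castSucc) = β (Fin.predAbove k k.succ)
  simp

/-- If `x` satisfies (†) (which forces `ℓ < r`), then `x̌` is degenerate at `ℓ`,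
`x̄` is degenerate at `ℓ-1`, and `(x̌∂ℓ)σℓ + (x̄∂ℓ)σ(ℓ-1) = x`; i.e. the parent of
the child of `x` is `x`. -/
theorem stmt17 (m n : ℕ) (x : ZD (m+1) (n+1)) (hx : memO x) (hnd : ¬ isDegen x)
    (hA : ¬ inA x) (r ℓ : Fin (m+1)) (hr : isRank x r) (hl : isLevel x r ℓ)
    (hdag : dagger x r ℓ) (hlr : (ℓ : ℕ) < (r : ℕ)) :
    isDegenAt (checkPart x r) (ℓ : ℕ) ∧ isDegenAt (barPart x r) ((ℓ : ℕ) - 1) ∧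
    act (act (checkPart x r) (face ℓ)) (degen ⟨(ℓ:ℕ), by have := r.isLt; omega⟩)
      + act (act (barPart x r) (face ℓ)) (degen ⟨(ℓ:ℕ)-1, by have := r.isLt; omega⟩)
      = x := by
  have hrm := r.isLt
  have hc : ∀ α ∈ (checkPart x r).support,
      α (Fin.castSucc ⟨(ℓ:ℕ), by omega⟩ : Fin (m+1)) = α (Fin.succ ⟨(ℓ:ℕ), by omega⟩) := by
    intro α hα
    have h1 : α ℓ = α r := hl.1 α hα
    refine le_antisymm (α.monotone (Fin.castSucc_le_succ _)) ?_
    change _ ≤ α ℓ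
    rw [h1]
    exact α.monotone (Fin.le_def.2 hlr)
  have hb := apply_eq_of_isDegenAt (barPart x r) ⟨(ℓ:ℕ)-1, by omega⟩ hdag
  have e1 := act_face_degen (checkPart x r) ⟨(ℓ:ℕ), by omega⟩ ℓ (Or.inl rfl) hc
  -- The left alternative covers the truncated subtraction at `ℓ = 0`, where `ℓ - 1` is `ℓ` itself.
  have e2 := act_face_degen (barPart x r) ⟨(ℓ:ℕ)-1, by omega⟩ ℓ
    (by simp only [Fin.ext_iff, Fin.val_castSucc, Fin.val_succ]; omega) hb
  refine ⟨⟨m, rfl, by omega, _, e1.symm⟩, hdag, ?_⟩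
  rw [e1, e2]
  exact (add_comm _ _).trans (Finsupp.filter_add_filter_not x _)
end
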